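/- arXiv:2008.13062 — 3 statements merged into one kernel-verified Lean document; each statement's English description precedes it below -/
import Mathlib

section
/- Let α be a type, A : Set α a sub-alphabet, and p_A the natural projection keeping exactly the letters in A. Let L be a language over α and let w be a word all of whose letters belong to A such that L · {w} · L ⊆ L. Then p_A⁻¹(L) · {w} · p_A⁻¹(L) ⊆ p_A⁻¹(L); that is, every synchronizing word of L is also a synchronizing word of the inverse projection p_A⁻¹(L). -/
/-- The inverse natural projection of a language: all words over `α` whose projection
(the subword of letters in `A`) lies in `L`. -/
def invProj {α : Type*} (A : Set α) [DecidablePred (· ∈ A)] (L : Language α) : Language α :=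
  {s : List α | s.filter (fun a => decide (a ∈ A)) ∈ L}

/-- Every synchronizing word of `L` composed only of letters of the sub-alphabet `A` is a
synchronizing word of the inverse projection of `L`. -/
theorem sync_word_of_inv_proj {α : Type*} (A : Set α) [DecidablePred (· ∈ A)]
    (L : Language α) (w : List α) (hwA : ∀ a ∈ w, a ∈ A)
    (h : L * ({w} : Language α) * L ≤ L) :
    invProj A L * ({w} : Language α) * invProj A L ≤ invProj A L := by
  intro s hs
  obtain ⟨u, hu, v, hv, rfl⟩ := Language.mem_mul.1 hs
  obtain ⟨x, hx, y, hy, rfl⟩ := Language.mem_mul.1 hu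
  have hy' : y = w := hy
  subst hy'
  have hf : y.filter (fun a => decide (a ∈ A)) = y :=
    List.filter_eq_self.2 (fun a ha => decide_eq_true (hwA a ha))
  change List.filter (fun a => decide (a ∈ A)) (x ++ y ++ v) ∈ L
  rw [List.filter_append, List.filter_append, hf]
  exact h (Language.mem_mul.2 ⟨_, Language.mem_mul.2 ⟨_, hx, y, hy, rfl⟩, _, hv, rfl⟩)
end

section
/- Let α be a type, A₁, A₂ : Set α two sub-alphabets, and p₁, p₂ the corresponding natural projections (List.filter (· ∈ A₁) and List.filter (· ∈ A₂)). Let L₁, I₁, L₂, I₂ be languages over α with L₁ · I₁ · L₁ ⊆ L₁ and L₂ · I₂ · L₂ ⊆ L₂, and suppose p₁⁻¹(I₁) ∩ p₂⁻¹(I₂) ≠ ∅. Then the language K = p₁⁻¹(L₁) ∩ p₂⁻¹(L₂) satisfies K · (p₁⁻¹(I₁) ∩ p₂⁻¹(I₂)) · K ⊆ K; i.e., the language of the parallel composition is a synchronizing language with nonempty synchronizing-word set p₁⁻¹(I₁) ∩ p₂⁻¹(I₂). (Language form of Proposition 2.) -/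
/-- Intersection of two languages. -/
def langInter {α : Type*} (L₁ L₂ : Language α) : Language α := {s | s ∈ L₁ ∧ s ∈ L₂}

/-- Language form of Proposition 2: the language of the parallel composition
`p₁⁻¹(L₁) ∩ p₂⁻¹(L₂)` of two synchronizing components is synchronizing, provided the
inverse projections of the synchronizing-word sets intersect. -/
theorem parallel_comp_sync {α : Type*} (A₁ A₂ : Set α)
    [DecidablePred (· ∈ A₁)] [DecidablePred (· ∈ A₂)]
    (L₁ I₁ L₂ I₂ : Language α)
    (h₁ : L₁ * I₁ * L₁ ≤ L₁) (h₂ : L₂ * I₂ * L₂ ≤ L₂)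
    (hne : langInter (invProj A₁ I₁) (invProj A₂ I₂) ≠ (∅ : Set (List α))) :
    langInter (invProj A₁ L₁) (invProj A₂ L₂) *
        langInter (invProj A₁ I₁) (invProj A₂ I₂) *
        langInter (invProj A₁ L₁) (invProj A₂ L₂) ≤
      langInter (invProj A₁ L₁) (invProj A₂ L₂) := by
  intro s hs
  obtain ⟨t, ht, w, hw, rfl⟩ := Language.mem_mul.mp hs
  obtain ⟨u, hu, v, hv, rfl⟩ := Language.mem_mul.mp ht
  refine ⟨?_, ?_⟩
  · change List.filter _ _ ∈ L₁
    rw [List.filter_append, List.filter_append]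
    exact h₁ (Language.append_mem_mul (Language.append_mem_mul hu.1 hv.1) hw.1)
  · change List.filter _ _ ∈ L₂
    rw [List.filter_append, List.filter_append]
    exact h₂ (Language.append_mem_mul (Language.append_mem_mul hu.2 hv.2) hw.2)
end

section
/- Let α be a type, A₁, A₂ : Set α two sub-alphabets with natural projections p₁, p₂ (List.filter (· ∈ A₁), List.filter (· ∈ A₂)), and let R₁, R₂ be finite subsets of α with R = R₁ ∪ R₂ nonempty, R ∩ A₁ = R₁ and R ∩ A₂ = R₂. Let L₁, L₂ be languages over α such that L₁ · {u} · L₁ ⊆ L₁ for every u ∈ perm(R₁, R₁) and L₂ · {v} · L₂ ⊆ L₂ for every v ∈ perm(R₂, R₂). Then the language K = p₁⁻¹(L₁) ∩ p₂⁻¹(L₂) satisfies K · {w} · K ⊆ K for every w ∈ perm(R, R), and perm(R, R) is nonempty; hence K is a synchronizing language. (Language form of Corollary 4: parallel composition of components modeled with recovery events is always synchronizing.) -/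
/-- `perm R B`: the words all of whose letters lie in `R` and in which every element of
`B` occurs exactly once. -/
def perm {α : Type*} [DecidableEq α] (R B : Finset α) : Language α :=
  {s : List α | (∀ a ∈ s, a ∈ R) ∧ ∀ b ∈ B, s.count b = 1}

theorem perm_filter_aux {α : Type*} [DecidableEq α] (A : Set α) [DecidablePred (· ∈ A)]
    (R S : Finset α) (h : (↑R : Set α) ∩ A = (↑S : Set α)) (w : List α) (hw : w ∈ perm R R) :
    w.filter (fun a => decide (a ∈ A)) ∈ perm S S := by
  have key : ∀ a, a ∈ S ↔ a ∈ R ∧ a ∈ A := fun a => by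
    have := Set.ext_iff.mp h a
    simpa using this.symm
  obtain ⟨h1, h2⟩ := hw
  refine ⟨fun a ha => ?_, fun b hb => ?_⟩
  · rw [List.mem_filter] at ha
    exact (key a).2 ⟨h1 a ha.1, by simpa using ha.2⟩
  · have hb' := (key b).1 hb
    rw [List.count_filter (by simpa using hb'.2)]
    exact h2 b hb'.1

theorem invProj_sync_aux {α : Type*} [DecidableEq α] (A : Set α) [DecidablePred (· ∈ A)]
    (R S : Finset α) (h : (↑R : Set α) ∩ A = (↑S : Set α)) (L : Language α)
    (hL : ∀ u ∈ perm S S, L * ({u} : Language α) * L ≤ L)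
    (w : List α) (hw : w ∈ perm R R) (x y : List α)
    (hx : x ∈ invProj A L) (hy : y ∈ invProj A L) : x ++ w ++ y ∈ invProj A L := by
  change List.filter _ _ ∈ L
  rw [List.filter_append, List.filter_append]
  exact hL _ (perm_filter_aux A R S h w hw)
    (Language.append_mem_mul (Language.append_mem_mul hx (Set.mem_singleton _)) hy)

/-- Language form of Corollary 4: the parallel composition of two components modeled with
recovery events is always synchronizing, every word of `perm(R, R)` (`R = R₁ ∪ R₂` the set
of recovery events) being a synchronizing word, and `perm(R, R)` being nonempty. -/
theorem recovery_parallel_sync {α : Type*} [DecidableEq α] (A₁ A₂ : Set α)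
    [DecidablePred (· ∈ A₁)] [DecidablePred (· ∈ A₂)]
    (R₁ R₂ : Finset α) (hne : (R₁ ∪ R₂).Nonempty)
    (h₁A : (↑(R₁ ∪ R₂) : Set α) ∩ A₁ = (↑R₁ : Set α))
    (h₂A : (↑(R₁ ∪ R₂) : Set α) ∩ A₂ = (↑R₂ : Set α))
    (L₁ L₂ : Language α)
    (hL₁ : ∀ u ∈ perm R₁ R₁, L₁ * ({u} : Language α) * L₁ ≤ L₁)
    (hL₂ : ∀ v ∈ perm R₂ R₂, L₂ * ({v} : Language α) * L₂ ≤ L₂) :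
    (∀ w ∈ perm (R₁ ∪ R₂) (R₁ ∪ R₂),
        langInter (invProj A₁ L₁) (invProj A₂ L₂) * ({w} : Language α) *
            langInter (invProj A₁ L₁) (invProj A₂ L₂) ≤
          langInter (invProj A₁ L₁) (invProj A₂ L₂)) ∧
      ∃ w, w ∈ perm (R₁ ∪ R₂) (R₁ ∪ R₂) := by
  refine ⟨?_, (R₁ ∪ R₂).toList, ?_, ?_⟩
  · intro w hw s hs
    obtain ⟨_, hs', y, hy, rfl⟩ := Language.mem_mul.1 hs
    obtain ⟨x, hx, w', hw', rfl⟩ := Language.mem_mul.1 hs'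
    obtain rfl : w' = w := hw'
    exact ⟨invProj_sync_aux A₁ _ R₁ h₁A L₁ hL₁ _ hw x y hx.1 hy.1,
      invProj_sync_aux A₂ _ R₂ h₂A L₂ hL₂ _ hw x y hx.2 hy.2⟩
  · intro a ha
    exact Finset.mem_toList.1 ha
  · intro b hb
    exact List.count_eq_one_of_mem (Finset.nodup_toList _) (Finset.mem_toList.2 hb)
end
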